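/- arXiv:1405.7891 — 3 statements merged into one kernel-verified Lean document; each statement's English description precedes it below -/
import Mathlib

section
/- Let Q(x,y) = x⁴ + y⁴ − 6x²y² and G(x,y) = Q(x,y) · log(x² + y²), defined for (x,y) ∈ ℝ² \ {(0,0)}. Then for every (x,y) ≠ (0,0), the Laplacian of G satisfies ΔG(x,y) = 16 Q(x,y) / (x² + y²). -/
/-!
`Q` is harmonic and homogeneous of degree 4, and `log (x² + y²)` is harmonic away from the origin,
so the product rule leaves only the cross term
`ΔG = 2 ∇Q · ∇ log (x² + y²) = (4 / (x² + y²)) (x ∂Q/∂x + y ∂Q/∂y) = 16 Q / (x² + y²)`.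
The second derivative in `x` is computed explicitly in `pdx_pdx_G`; the one in `y` follows from
the symmetry `G x y = G y x`.
-/

/-- Partial derivative in the first variable. -/
noncomputable def pdx (f : ℝ → ℝ → ℝ) (x y : ℝ) : ℝ := deriv (fun t => f t y) x

/-- Partial derivative in the second variable. -/
noncomputable def pdy (f : ℝ → ℝ → ℝ) (x y : ℝ) : ℝ := deriv (fun t => f x t) y

/-- The polynomial `Q(x,y) = x⁴ + y⁴ − 6 x² y²`. -/
def Q (x y : ℝ) : ℝ := x ^ 4 + y ^ 4 - 6 * x ^ 2 * y ^ 2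

/-- `G(x,y) = Q(x,y) log(x² + y²)`. -/
noncomputable def G (x y : ℝ) : ℝ := Q x y * Real.log (x ^ 2 + y ^ 2)

theorem hasDerivAt_log_sq_add (x y : ℝ) (hr : x ^ 2 + y ^ 2 ≠ 0) :
    HasDerivAt (fun t => Real.log (t ^ 2 + y ^ 2)) (2 * x / (x ^ 2 + y ^ 2)) x := by
  have h := (((hasDerivAt_id x).pow 2).add_const (y ^ 2)).log hr
  simpa using h

theorem hasDerivAt_Q (x y : ℝ) :
    HasDerivAt (fun t => Q t y) (4 * x ^ 3 - 12 * x * y ^ 2) x := by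
  have h := (((hasDerivAt_id x).pow 4).add_const (y ^ 4)).sub
    ((((hasDerivAt_id x).pow 2).const_mul 6).mul_const (y ^ 2))
  refine h.congr_deriv ?_
  simp only [id, Nat.cast_ofNat]
  ring

theorem pdx_G (x y : ℝ) (hr : x ^ 2 + y ^ 2 ≠ 0) :
    pdx G x y = (4 * x ^ 3 - 12 * x * y ^ 2) * Real.log (x ^ 2 + y ^ 2)
      + Q x y * (2 * x / (x ^ 2 + y ^ 2)) :=
  ((hasDerivAt_Q x y).mul (hasDerivAt_log_sq_add x y hr)).deriv

theorem pdx_pdx_G (x y : ℝ) (hr : x ^ 2 + y ^ 2 ≠ 0) :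
    pdx (pdx G) x y = (12 * x ^ 2 - 12 * y ^ 2) * Real.log (x ^ 2 + y ^ 2)
      + 2 * (4 * x ^ 3 - 12 * x * y ^ 2) * (2 * x / (x ^ 2 + y ^ 2))
      + Q x y * ((2 * y ^ 2 - 2 * x ^ 2) / (x ^ 2 + y ^ 2) ^ 2) := by
  -- The formula for `pdx G` holds only off the origin, hence merely near `x` on the line at
  -- height `y`; this is enough to differentiate it again.
  have hev : (fun t => pdx G t y) =ᶠ[nhds x] fun t =>
      (4 * t ^ 3 - 12 * t * y ^ 2) * Real.log (t ^ 2 + y ^ 2)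
        + Q t y * (2 * t / (t ^ 2 + y ^ 2)) := by
    have hc : ContinuousAt (fun t : ℝ => t ^ 2 + y ^ 2) x := by fun_prop
    filter_upwards [hc.eventually_ne hr] with t ht using pdx_G t y ht
  have hQ' : HasDerivAt (fun t : ℝ => 4 * t ^ 3 - 12 * t * y ^ 2)
      (12 * x ^ 2 - 12 * y ^ 2) x := by
    refine ((((hasDerivAt_id x).pow 3).const_mul 4).sub
      (((hasDerivAt_id x).const_mul 12).mul_const (y ^ 2))).congr_deriv ?_
    simp only [id, Nat.cast_ofNat]
    ring
  have hL' : HasDerivAt (fun t : ℝ => 2 * t / (t ^ 2 + y ^ 2))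
      ((2 * y ^ 2 - 2 * x ^ 2) / (x ^ 2 + y ^ 2) ^ 2) x := by
    refine (((hasDerivAt_id x).const_mul 2).div
      (((hasDerivAt_id x).pow 2).add_const (y ^ 2)) hr).congr_deriv ?_
    simp only [Pi.pow_apply, id, Nat.cast_ofNat]
    ring
  have h := (hQ'.mul (hasDerivAt_log_sq_add x y hr)).add ((hasDerivAt_Q x y).mul hL')
  refine hev.deriv_eq.trans (h.deriv.trans ?_)
  ring

theorem G_symm (x y : ℝ) : G x y = G y x := by
  unfold G Q
  rw [add_comm (x ^ 2)]
  ring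

theorem pdy_pdy_G (x y : ℝ) : pdy (pdy G) x y = pdx (pdx G) y x := by
  simp only [pdx, pdy, G_symm x]

/-- Away from the origin, `ΔG(x,y) = 16 Q(x,y) / (x² + y²)`. -/
theorem laplacian_G (x y : ℝ) (h : (x, y) ≠ ((0 : ℝ), (0 : ℝ))) :
    pdx (pdx G) x y + pdy (pdy G) x y = 16 * Q x y / (x ^ 2 + y ^ 2) := by
  have hr : x ^ 2 + y ^ 2 ≠ 0 := by
    intro h0
    apply h
    have hx : x = 0 := by nlinarith [sq_nonneg x, sq_nonneg y]
    have hy : y = 0 := by nlinarith [sq_nonneg x, sq_nonneg y]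
    rw [hx, hy]
  rw [pdy_pdy_G, pdx_pdx_G x y hr, pdx_pdx_G y x (by rwa [add_comm]), add_comm (y ^ 2)]
  unfold Q
  field_simp
  ring
end

section
/- Let Q(x,y) = x⁴ + y⁴ − 6x²y² and G(x,y) = Q(x,y) · log(x² + y²), defined for (x,y) ∈ ℝ² \ {(0,0)}. Then there exists a function H, bounded on the punctured unit ball B₁ \ {0}, such that ∂⁴G/∂x²∂y²(x,y) = −24 log(x² + y²) + H(x,y) for all 0 < x² + y² < 1. In particular ∂⁴G/∂x²∂y² has a logarithmic singularity at the origin. -/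
/-- A closed form valid on the open set `t² + c > 0` may be differentiated at each of its points. -/
lemma deriv_eq_of_formula {f g : ℝ → ℝ} {c s d : ℝ} (hs : 0 < s ^ 2 + c)
    (hfg : ∀ t : ℝ, 0 < t ^ 2 + c → f t = g t) (hg : HasDerivAt g d s) : deriv f s = d := by
  have hopen : IsOpen {t : ℝ | 0 < t ^ 2 + c} := isOpen_lt (by fun_prop) (by fun_prop)
  have hev : f =ᶠ[nhds s] g := by
    filter_upwards [hopen.mem_nhds hs] with t ht using hfg t ht
  exact (hg.congr_of_eventuallyEq hev).deriv

/-- One differentiation step for functions of the form `P log r + N / r ^ k`, where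
`r = t² + c`. -/
lemma hasDerivAt_log_add_div {P N : ℝ → ℝ} {dP dN c s : ℝ} (k : ℕ) (hs : 0 < s ^ 2 + c)
    (hP : HasDerivAt P dP s) (hN : HasDerivAt N dN s) :
    HasDerivAt (fun t => P t * Real.log (t ^ 2 + c) + N t / (t ^ 2 + c) ^ k)
      (dP * Real.log (s ^ 2 + c) +
        (2 * s * P s * (s ^ 2 + c) ^ k + dN * (s ^ 2 + c) - k * (2 * s) * N s)
          / (s ^ 2 + c) ^ (k + 1)) s := by
  have hr : HasDerivAt (fun t : ℝ => t ^ 2 + c) (2 * s) s := by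
    simpa using (hasDerivAt_pow 2 s).add_const c
  have hne : s ^ 2 + c ≠ 0 := hs.ne'
  have h := (hP.mul (hr.log hne)).add (hN.div (hr.pow k) (pow_ne_zero k hne))
  refine h.congr_deriv ?_
  simp only [Pi.pow_apply]
  rcases k with _ | k
  · field_simp
    simp
    ring
  · simp only [Nat.add_sub_cancel]
    field_simp
    ring

lemma pdy_G (x y : ℝ) (h : 0 < x ^ 2 + y ^ 2) :
    pdy G x y = (4 * y ^ 3 - 12 * x ^ 2 * y) * Real.log (x ^ 2 + y ^ 2) +
      (2 * x ^ 4 * y - 12 * x ^ 2 * y ^ 3 + 2 * y ^ 5) / (x ^ 2 + y ^ 2) ^ 1 := by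
  rw [add_comm (x ^ 2)] at h ⊢
  have hP : HasDerivAt (fun t : ℝ => x ^ 4 + t ^ 4 - 6 * x ^ 2 * t ^ 2)
      (4 * y ^ 3 - 12 * x ^ 2 * y) y := by
    refine (((hasDerivAt_pow 4 y).const_add (x ^ 4)).sub
      ((hasDerivAt_pow 2 y).const_mul (6 * x ^ 2))).congr_deriv ?_
    norm_num
    ring
  refine deriv_eq_of_formula h (fun t _ => ?_)
    ((hasDerivAt_log_add_div 0 h hP (hasDerivAt_const y 0)).congr_deriv ?_)
  · simp [G, Q, add_comm (x ^ 2)]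
  · congr 2
    norm_num
    ring

lemma pdy_pdy_G_s6 (x y : ℝ) (h : 0 < x ^ 2 + y ^ 2) :
    pdy (pdy G) x y = (12 * y ^ 2 - 12 * x ^ 2) * Real.log (x ^ 2 + y ^ 2) +
      (2 * x ^ 6 - 62 * x ^ 4 * y ^ 2 - 18 * x ^ 2 * y ^ 4 + 14 * y ^ 6)
        / (x ^ 2 + y ^ 2) ^ 2 := by
  rw [add_comm (x ^ 2)] at h ⊢
  have hP : HasDerivAt (fun t : ℝ => 4 * t ^ 3 - 12 * x ^ 2 * t)
      (12 * y ^ 2 - 12 * x ^ 2) y := by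
    refine (((hasDerivAt_pow 3 y).const_mul 4).sub
      ((hasDerivAt_id y).const_mul (12 * x ^ 2))).congr_deriv ?_
    norm_num
    ring
  have hN : HasDerivAt (fun t : ℝ => 2 * x ^ 4 * t - 12 * x ^ 2 * t ^ 3 + 2 * t ^ 5)
      (2 * x ^ 4 - 36 * x ^ 2 * y ^ 2 + 10 * y ^ 4) y := by
    refine ((((hasDerivAt_id y).const_mul (2 * x ^ 4)).sub
      ((hasDerivAt_pow 3 y).const_mul (12 * x ^ 2))).add
      ((hasDerivAt_pow 5 y).const_mul 2)).congr_deriv ?_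
    norm_num
    ring
  refine deriv_eq_of_formula h (fun t ht => ?_)
    ((hasDerivAt_log_add_div 1 h hP hN).congr_deriv ?_)
  · rw [add_comm] at ht
    rw [pdy_G x t ht, add_comm (x ^ 2)]
  · congr 2
    norm_num
    ring

lemma pdx_pdy_pdy_G (x y : ℝ) (h : 0 < x ^ 2 + y ^ 2) :
    pdx (pdy (pdy G)) x y = (-24 * x) * Real.log (x ^ 2 + y ^ 2) +
      (-20 * x ^ 7 - 12 * y ^ 2 * x ^ 5 - 188 * y ^ 4 * x ^ 3 - 68 * y ^ 6 * x)
        / (x ^ 2 + y ^ 2) ^ 3 := by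
  have hP : HasDerivAt (fun t : ℝ => 12 * y ^ 2 - 12 * t ^ 2) (-24 * x) x := by
    refine (((hasDerivAt_pow 2 x).const_mul 12).const_sub (12 * y ^ 2)).congr_deriv ?_
    norm_num
    ring
  have hN : HasDerivAt
      (fun t : ℝ => 2 * t ^ 6 - 62 * t ^ 4 * y ^ 2 - 18 * t ^ 2 * y ^ 4 + 14 * y ^ 6)
      (12 * x ^ 5 - 248 * x ^ 3 * y ^ 2 - 36 * x * y ^ 4) x := by
    refine (((((hasDerivAt_pow 6 x).const_mul 2).sub
      (((hasDerivAt_pow 4 x).const_mul 62).mul_const (y ^ 2))).sub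
      (((hasDerivAt_pow 2 x).const_mul 18).mul_const (y ^ 4))).add_const
      (14 * y ^ 6)).congr_deriv ?_
    norm_num
    ring
  refine deriv_eq_of_formula h (fun t ht => pdy_pdy_G_s6 t y ht)
    ((hasDerivAt_log_add_div 2 h hP hN).congr_deriv ?_)
  congr 2
  norm_num
  ring

lemma pdx_pdx_pdy_pdy_G (x y : ℝ) (h : 0 < x ^ 2 + y ^ 2) :
    pdx (pdx (pdy (pdy G))) x y = -24 * Real.log (x ^ 2 + y ^ 2) +
      (-68 * (x ^ 2 + y ^ 2) ^ 4 + 768 * x ^ 4 * y ^ 4) / (x ^ 2 + y ^ 2) ^ 4 := by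
  have hP : HasDerivAt (fun t : ℝ => -24 * t) (-24) x := by
    simpa using (hasDerivAt_id x).const_mul (-24 : ℝ)
  have hN : HasDerivAt
      (fun t : ℝ => -20 * t ^ 7 - 12 * y ^ 2 * t ^ 5 - 188 * y ^ 4 * t ^ 3 - 68 * y ^ 6 * t)
      (-140 * x ^ 6 - 60 * y ^ 2 * x ^ 4 - 564 * y ^ 4 * x ^ 2 - 68 * y ^ 6) x := by
    refine (((((hasDerivAt_pow 7 x).const_mul (-20)).sub
      ((hasDerivAt_pow 5 x).const_mul (12 * y ^ 2))).sub
      ((hasDerivAt_pow 3 x).const_mul (188 * y ^ 4))).sub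
      ((hasDerivAt_id x).const_mul (68 * y ^ 6))).congr_deriv ?_
    norm_num
    ring
  refine deriv_eq_of_formula h (fun t ht => pdx_pdy_pdy_G t y ht)
    ((hasDerivAt_log_add_div 3 h hP hN).congr_deriv ?_)
  congr 2
  norm_num
  ring

/-- On the punctured unit ball, `∂ₓ∂ₓ∂_y∂_y G = −24 log(x² + y²) + H(x,y)` with `H`
bounded there: a logarithmic singularity at the origin. -/
theorem mixed_fourth_derivative_G_log_singularity :
    ∃ H : ℝ → ℝ → ℝ,
      (∃ M : ℝ, ∀ x y : ℝ, 0 < x ^ 2 + y ^ 2 → x ^ 2 + y ^ 2 < 1 → |H x y| ≤ M) ∧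
      (∀ x y : ℝ, 0 < x ^ 2 + y ^ 2 → x ^ 2 + y ^ 2 < 1 →
        pdx (pdx (pdy (pdy G))) x y = -24 * Real.log (x ^ 2 + y ^ 2) + H x y) := by
  refine ⟨fun x y => (-68 * (x ^ 2 + y ^ 2) ^ 4 + 768 * x ^ 4 * y ^ 4) / (x ^ 2 + y ^ 2) ^ 4,
    ⟨68, fun x y h _ => ?_⟩, fun x y h _ => pdx_pdx_pdy_pdy_G x y h⟩
  have hr : 0 < (x ^ 2 + y ^ 2) ^ 4 := by positivity
  have hxy : 0 ≤ x ^ 4 * y ^ 4 := by positivity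
  -- AM-GM `4x²y² ≤ r²`, squared.
  have hamgm : 16 * (x ^ 4 * y ^ 4) ≤ (x ^ 2 + y ^ 2) ^ 4 := by
    have h1 : 4 * (x ^ 2 * y ^ 2) ≤ (x ^ 2 + y ^ 2) ^ 2 := by
      nlinarith [sq_nonneg (x ^ 2 - y ^ 2)]
    calc 16 * (x ^ 4 * y ^ 4) = (4 * (x ^ 2 * y ^ 2)) ^ 2 := by ring
      _ ≤ ((x ^ 2 + y ^ 2) ^ 2) ^ 2 := by gcongr
      _ = (x ^ 2 + y ^ 2) ^ 4 := by ring
  rw [abs_le, le_div_iff₀ hr, div_le_iff₀ hr]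
  constructor <;> linarith
end

section
/- There exists a function G, smooth on ℝ² \ {(0,0)} (one may take G(x,y) = (x⁴ + y⁴ − 6x²y²) · log(x² + y²)), such that all second partial derivatives ∂ᵢ∂ⱼ(ΔG), i,j ∈ {1,2}, are bounded on the punctured unit ball B₁ \ {0}, yet the fourth derivative ∂⁴G/∂x²∂y² is unbounded on B₁ \ {0}. -/
/-- Partial derivative in the `i`-th variable, `i ∈ {1, 2}` encoded as `Fin 2`. -/
noncomputable def pd (i : Fin 2) : (ℝ → ℝ → ℝ) → ℝ → ℝ → ℝ :=
  if i = 0 then pdx else pdy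

/-- The Laplacian `Δf = ∂²f/∂x² + ∂²f/∂y²`. -/
noncomputable def lap (f : ℝ → ℝ → ℝ) (x y : ℝ) : ℝ :=
  pdx (pdx f) x y + pdy (pdy f) x y

/-- The function `(x⁴ + y⁴ - 6x²y²) log (x² + y²)`. -/
noncomputable def GG (x y : ℝ) : ℝ :=
  (x ^ 4 + y ^ 4 - 6 * x ^ 2 * y ^ 2) * Real.log (x ^ 2 + y ^ 2)

/-- Two functions agreeing off the origin have the same `x`-derivative off the origin. -/
lemma pdx_congr {f g : ℝ → ℝ → ℝ} (h : ∀ x y : ℝ, x ^ 2 + y ^ 2 ≠ 0 → f x y = g x y)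
    {x y : ℝ} (hs : x ^ 2 + y ^ 2 ≠ 0) : pdx f x y = pdx g x y := by
  apply Filter.EventuallyEq.deriv_eq
  have hc : ContinuousAt (fun t : ℝ => t ^ 2 + y ^ 2) x := by fun_prop
  filter_upwards [hc.eventually_ne hs] with t ht using h t y ht

/-- Two functions agreeing off the origin have the same `y`-derivative off the origin. -/
lemma pdy_congr {f g : ℝ → ℝ → ℝ} (h : ∀ x y : ℝ, x ^ 2 + y ^ 2 ≠ 0 → f x y = g x y)
    {x y : ℝ} (hs : x ^ 2 + y ^ 2 ≠ 0) : pdy f x y = pdy g x y := by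
  apply Filter.EventuallyEq.deriv_eq
  have hc : ContinuousAt (fun t : ℝ => x ^ 2 + t ^ 2) y := by fun_prop
  filter_upwards [hc.eventually_ne hs] with t ht using h x t ht

lemma GG_symm (x y : ℝ) : GG x y = GG y x := by
  unfold GG
  rw [add_comm (y ^ 2)]
  ring

lemma hasDerivAt_s (x y : ℝ) : HasDerivAt (fun t : ℝ => x ^ 2 + t ^ 2) (2 * y) y := by
  simpa using (hasDerivAt_pow 2 y).const_add (x ^ 2)

lemma hasDerivAt_s' (x y : ℝ) : HasDerivAt (fun t : ℝ => t ^ 2 + y ^ 2) (2 * x) x := by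
  simpa using (hasDerivAt_pow 2 x).add_const (y ^ 2)

lemma pdy_GG (x y : ℝ) (hs : x ^ 2 + y ^ 2 ≠ 0) :
    pdy GG x y = (4 * y ^ 3 - 12 * x ^ 2 * y) * Real.log (x ^ 2 + y ^ 2) +
      (x ^ 4 + y ^ 4 - 6 * x ^ 2 * y ^ 2) * (2 * y / (x ^ 2 + y ^ 2)) := by
  refine HasDerivAt.deriv ?_
  have h1 : HasDerivAt (fun t : ℝ => x ^ 4 + t ^ 4 - 6 * x ^ 2 * t ^ 2)
      (4 * y ^ 3 - 12 * x ^ 2 * y) y := by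
    have h := ((hasDerivAt_pow 4 y).const_add (x ^ 4)).sub
      ((hasDerivAt_pow 2 y).const_mul (6 * x ^ 2))
    refine h.congr_deriv ?_
    push_cast; ring
  exact h1.mul ((hasDerivAt_s x y).log hs)

lemma pdyy_GG (x y : ℝ) (hs : x ^ 2 + y ^ 2 ≠ 0) :
    pdy (pdy GG) x y = (12 * y ^ 2 - 12 * x ^ 2) * Real.log (x ^ 2 + y ^ 2) +
      (4 * y ^ 3 - 12 * x ^ 2 * y) * (4 * y / (x ^ 2 + y ^ 2)) +
      (x ^ 4 + y ^ 4 - 6 * x ^ 2 * y ^ 2) *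
        ((2 * x ^ 2 - 2 * y ^ 2) / (x ^ 2 + y ^ 2) ^ 2) := by
  rw [pdy_congr pdy_GG hs]
  refine HasDerivAt.deriv ?_
  have h1 : HasDerivAt (fun t : ℝ => x ^ 4 + t ^ 4 - 6 * x ^ 2 * t ^ 2)
      (4 * y ^ 3 - 12 * x ^ 2 * y) y := by
    have h := ((hasDerivAt_pow 4 y).const_add (x ^ 4)).sub
      ((hasDerivAt_pow 2 y).const_mul (6 * x ^ 2))
    refine h.congr_deriv ?_
    push_cast; ring
  have h2 : HasDerivAt (fun t : ℝ => 4 * t ^ 3 - 12 * x ^ 2 * t)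
      (12 * y ^ 2 - 12 * x ^ 2) y := by
    have h := ((hasDerivAt_pow 3 y).const_mul 4).sub
      ((hasDerivAt_id y).const_mul (12 * x ^ 2))
    refine h.congr_deriv ?_
    push_cast; ring
  have h := (h2.mul ((hasDerivAt_s x y).log hs)).add
    (h1.mul (((hasDerivAt_id y).const_mul 2).div (hasDerivAt_s x y) hs))
  refine h.congr_deriv ?_
  simp only [id, Pi.div_apply]
  field_simp
  ring

lemma pdxx_GG (x y : ℝ) : pdx (pdx GG) x y = pdy (pdy GG) y x := by
  have h : ∀ a b, pdx GG a b = pdy GG b a := fun a b => by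
    unfold pdx pdy
    simp_rw [GG_symm _ b]
  change deriv _ _ = deriv _ _
  simp_rw [h]

lemma lap_GG (x y : ℝ) (hs : x ^ 2 + y ^ 2 ≠ 0) :
    lap GG x y = 16 * (x ^ 2 + y ^ 2) - 128 * (x ^ 2 * y ^ 2 / (x ^ 2 + y ^ 2)) := by
  have hs' : y ^ 2 + x ^ 2 ≠ 0 := by rwa [add_comm]
  unfold lap
  rw [pdxx_GG, pdyy_GG y x hs', pdyy_GG x y hs, add_comm (y ^ 2) (x ^ 2)]
  field_simp
  ring

lemma pdx_lap (x y : ℝ) (hs : x ^ 2 + y ^ 2 ≠ 0) :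
    pdx (lap GG) x y = 32 * x - 256 * (x * y ^ 4 / (x ^ 2 + y ^ 2) ^ 2) := by
  rw [pdx_congr lap_GG hs]
  refine HasDerivAt.deriv ?_
  have h := ((hasDerivAt_s' x y).const_mul 16).sub
    ((((hasDerivAt_pow 2 x).mul_const (y ^ 2)).div (hasDerivAt_s' x y) hs).const_mul 128)
  refine h.congr_deriv ?_
  push_cast
  field_simp
  ring

lemma pdy_lap (x y : ℝ) (hs : x ^ 2 + y ^ 2 ≠ 0) :
    pdy (lap GG) x y = 32 * y - 256 * (x ^ 4 * y / (x ^ 2 + y ^ 2) ^ 2) := by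
  rw [pdy_congr lap_GG hs]
  refine HasDerivAt.deriv ?_
  have h := ((hasDerivAt_s x y).const_mul 16).sub
    ((((hasDerivAt_pow 2 y).const_mul (x ^ 2)).div (hasDerivAt_s x y) hs).const_mul 128)
  refine h.congr_deriv ?_
  push_cast
  field_simp
  ring

lemma pdxx_lap (x y : ℝ) (hs : x ^ 2 + y ^ 2 ≠ 0) :
    pdx (pdx (lap GG)) x y =
      32 - 256 * ((y ^ 6 - 3 * x ^ 2 * y ^ 4) / (x ^ 2 + y ^ 2) ^ 3) := by
  rw [pdx_congr pdx_lap hs]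
  refine HasDerivAt.deriv ?_
  have h := ((hasDerivAt_id x).const_mul 32).sub
    ((((hasDerivAt_id x).mul_const (y ^ 4)).div ((hasDerivAt_s' x y).pow 2)
      (pow_ne_zero 2 hs)).const_mul 256)
  refine h.congr_deriv ?_
  simp only [id, Pi.pow_apply]
  push_cast
  field_simp
  ring

lemma pdyy_lap (x y : ℝ) (hs : x ^ 2 + y ^ 2 ≠ 0) :
    pdy (pdy (lap GG)) x y =
      32 - 256 * ((x ^ 6 - 3 * x ^ 4 * y ^ 2) / (x ^ 2 + y ^ 2) ^ 3) := by
  rw [pdy_congr pdy_lap hs]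
  refine HasDerivAt.deriv ?_
  have h := ((hasDerivAt_id y).const_mul 32).sub
    ((((hasDerivAt_id y).const_mul (x ^ 4)).div ((hasDerivAt_s x y).pow 2)
      (pow_ne_zero 2 hs)).const_mul 256)
  refine h.congr_deriv ?_
  simp only [id, Pi.pow_apply]
  push_cast
  field_simp
  ring

lemma pdxy_lap (x y : ℝ) (hs : x ^ 2 + y ^ 2 ≠ 0) :
    pdx (pdy (lap GG)) x y = - (1024 * (x ^ 3 * y ^ 3 / (x ^ 2 + y ^ 2) ^ 3)) := by
  rw [pdx_congr pdy_lap hs]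
  refine HasDerivAt.deriv ?_
  have h := (((((hasDerivAt_pow 4 x).mul_const y).div ((hasDerivAt_s' x y).pow 2)
      (pow_ne_zero 2 hs)).const_mul 256).const_sub (32 * y))
  refine h.congr_deriv ?_
  simp only [Pi.pow_apply]
  push_cast
  field_simp
  ring

lemma pdyx_lap (x y : ℝ) (hs : x ^ 2 + y ^ 2 ≠ 0) :
    pdy (pdx (lap GG)) x y = - (1024 * (x ^ 3 * y ^ 3 / (x ^ 2 + y ^ 2) ^ 3)) := by
  rw [pdy_congr pdx_lap hs]
  refine HasDerivAt.deriv ?_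
  have h := (((((hasDerivAt_pow 4 y).const_mul x).div ((hasDerivAt_s x y).pow 2)
      (pow_ne_zero 2 hs)).const_mul 256).const_sub (32 * x))
  refine h.congr_deriv ?_
  simp only [Pi.pow_apply]
  push_cast
  field_simp
  ring

/-- The numerators of the pure second derivatives of `ΔG` are dominated by `s³`. -/
lemma abs_pure_le (x y : ℝ) (hs : 0 < x ^ 2 + y ^ 2) :
    |(x ^ 6 - 3 * x ^ 4 * y ^ 2) / (x ^ 2 + y ^ 2) ^ 3| ≤ 1 := by
  rw [abs_div, abs_of_pos (pow_pos hs 3), div_le_one (pow_pos hs 3), abs_le]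
  have h1 : 0 ≤ x ^ 6 := by positivity
  have h2 : 0 ≤ x ^ 4 * y ^ 2 := by positivity
  have h3 : 0 ≤ x ^ 2 * y ^ 4 := by positivity
  have h4 : 0 ≤ y ^ 6 := by positivity
  constructor <;> linarith [show (x ^ 2 + y ^ 2) ^ 3 =
    x ^ 6 + 3 * (x ^ 4 * y ^ 2) + 3 * (x ^ 2 * y ^ 4) + y ^ 6 by ring]

lemma abs_mixed_le (x y : ℝ) (hs : 0 < x ^ 2 + y ^ 2) :
    |x ^ 3 * y ^ 3 / (x ^ 2 + y ^ 2) ^ 3| ≤ 1 := by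
  rw [← mul_pow, ← div_pow, abs_pow]
  refine pow_le_one₀ (abs_nonneg _) ?_
  rw [abs_div, abs_of_pos hs, div_le_one hs, abs_le]
  constructor <;> nlinarith [sq_nonneg (x + y), sq_nonneg (x - y)]

/-- Along the positive `x`-axis the fourth derivative is computed from the restriction of
`∂²G/∂y²` to the axis alone. -/
lemma pdxxyy_GG (x : ℝ) (hx : 0 < x) :
    pdx (pdx (pdy (pdy GG))) x 0 = -48 * Real.log x - 68 := by
  have h0 : ∀ t : ℝ, 0 < t →
      pdy (pdy GG) t 0 = -24 * (t ^ 2 * Real.log t) + 2 * t ^ 2 := by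
    intro t ht
    have : t ^ 2 + (0 : ℝ) ^ 2 ≠ 0 := by positivity
    rw [pdyy_GG t 0 this]
    have hl : Real.log (t ^ 2 + 0 ^ 2) = 2 * Real.log t := by
      simp [Real.log_pow]
    rw [hl]
    field_simp
    ring
  have h1 : ∀ t : ℝ, 0 < t →
      pdx (pdy (pdy GG)) t 0 = -48 * (t * Real.log t) - 20 * t := by
    intro t ht
    have he : (fun u => pdy (pdy GG) u 0) =ᶠ[nhds t]
        fun u => -24 * (u ^ 2 * Real.log u) + 2 * u ^ 2 := by
      filter_upwards [lt_mem_nhds ht] with u hu using h0 u hu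
    refine he.deriv_eq.trans (HasDerivAt.deriv ?_)
    have h := (((hasDerivAt_pow 2 t).mul (Real.hasDerivAt_log ht.ne')).const_mul (-24)).add
      ((hasDerivAt_pow 2 t).const_mul 2)
    refine h.congr_deriv ?_
    push_cast
    field_simp
    ring
  have he : (fun u => pdx (pdy (pdy GG)) u 0) =ᶠ[nhds x]
      fun u => -48 * (u * Real.log u) - 20 * u := by
    filter_upwards [lt_mem_nhds hx] with u hu using h1 u hu
  refine he.deriv_eq.trans (HasDerivAt.deriv ?_)
  have h := (((hasDerivAt_id x).mul (Real.hasDerivAt_log hx.ne')).const_mul (-48)).sub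
    ((hasDerivAt_id x).const_mul 20)
  refine h.congr_deriv ?_
  simp only [id]
  field_simp
  ring

/-- There is a function `G`, smooth away from the origin, with all second derivatives
of `ΔG` bounded on the punctured unit ball, while `∂⁴G/∂x²∂y²` is unbounded there. -/
theorem exists_G_laplacian_derivs_bounded_fourth_deriv_unbounded :
    ∃ G : ℝ → ℝ → ℝ,
      ContDiffOn ℝ (⊤ : ℕ∞) (fun p : ℝ × ℝ => G p.1 p.2) {p : ℝ × ℝ | p ≠ (0, 0)} ∧
      (∀ i j : Fin 2, ∃ M : ℝ, ∀ x y : ℝ,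
        0 < x ^ 2 + y ^ 2 → x ^ 2 + y ^ 2 < 1 → |pd i (pd j (lap G)) x y| ≤ M) ∧
      ¬ (∃ M : ℝ, ∀ x y : ℝ,
        0 < x ^ 2 + y ^ 2 → x ^ 2 + y ^ 2 < 1 →
          |pdx (pdx (pdy (pdy G))) x y| ≤ M) := by
  refine ⟨GG, ?_, ?_, ?_⟩
  · unfold GG
    refine ContDiffOn.mul (by fun_prop) (ContDiffOn.log (by fun_prop) ?_)
    rintro ⟨x, y⟩ hp h
    apply hp
    have h' : x ^ 2 + y ^ 2 = 0 := h
    have hx : x = 0 := by nlinarith [sq_nonneg x, sq_nonneg y]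
    have hy : y = 0 := by nlinarith [sq_nonneg x, sq_nonneg y]
    rw [hx, hy]
  · intro i j
    refine ⟨1024, fun x y hs _ => ?_⟩
    have hm := abs_le.1 (abs_mixed_le x y hs)
    have hp := abs_le.1 (abs_pure_le x y hs)
    have hq := abs_le.1 (abs_pure_le y x (by linarith))
    have hxx : |pdx (pdx (lap GG)) x y| ≤ 1024 := by
      rw [show (y ^ 6 - 3 * y ^ 4 * x ^ 2) / (y ^ 2 + x ^ 2) ^ 3 =
        (y ^ 6 - 3 * x ^ 2 * y ^ 4) / (x ^ 2 + y ^ 2) ^ 3 by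
          rw [add_comm (y ^ 2)]; ring] at hq
      rw [pdxx_lap x y hs.ne', abs_le]
      constructor <;> linarith
    have hyy : |pdy (pdy (lap GG)) x y| ≤ 1024 := by
      rw [pdyy_lap x y hs.ne', abs_le]
      constructor <;> linarith
    have hxy : |pdx (pdy (lap GG)) x y| ≤ 1024 := by
      rw [pdxy_lap x y hs.ne', abs_le]
      constructor <;> linarith
    have hyx : |pdy (pdx (lap GG)) x y| ≤ 1024 := by
      rw [pdyx_lap x y hs.ne', abs_le]
      constructor <;> linarith
    fin_cases i <;> fin_cases j <;> simpa [pd]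
  · rintro ⟨M, hM⟩
    -- At `x = exp (-(|M| + 2))` the derivative is `48 (|M| + 2) - 68 > M`.
    have hlt : Real.exp (-(|M| + 2)) < 1 := by
      rw [Real.exp_lt_one_iff]
      linarith [abs_nonneg M]
    have hpos := Real.exp_pos (-(|M| + 2))
    have h := hM (Real.exp (-(|M| + 2))) 0 (by positivity) (by nlinarith)
    rw [pdxxyy_GG _ hpos, Real.log_exp] at h
    linarith [le_abs_self (-48 * -(|M| + 2) - 68), le_abs_self M, abs_nonneg M]
end
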